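/- arXiv:1905.00514 — 9 statements merged into one kernel-verified Lean document; each statement's English description precedes it below -/
import Mathlib

section
/- Let 𝓘 be an ideal on ℕ and let x : ℕ → ℝ^k be an 𝓘-bounded sequence, i.e., there exists a constant c such that {n : ‖x n‖ > c} ∈ 𝓘. Then the 𝓘-core of x equals the (not necessarily closed) convex hull of the set of 𝓘-cluster points of x: core_x(𝓘) = convexHull ℝ (Γ_x(𝓘)). -/
open Filter Topology

/-- In finite dimension, the convex hull of a compact set is compact (via Carathéodory). -/
theorem isCompact_convexHull_aux {k : ℕ} {s : Set (EuclideanSpace ℝ (Fin k))}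
    (hs : IsCompact s) : IsCompact (convexHull ℝ s) := by
  have key : convexHull ℝ s = ⋃ m ∈ Finset.range (k + 2),
      (fun q : (Fin m → ℝ) × (Fin m → EuclideanSpace ℝ (Fin k)) => ∑ i, q.1 i • q.2 i) ''
        (stdSimplex ℝ (Fin m) ×ˢ Set.pi Set.univ (fun _ => s)) := by
    apply Set.Subset.antisymm
    · intro p hp
      obtain ⟨ι, _, z, w, hz, hai, hw, hw1, hsum⟩ := eq_pos_convex_span_of_mem_convexHull hp
      have hcard : Fintype.card ι ≤ k + 1 := by
        have h1 := hai.card_le_finrank_succ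
        have h2 := Submodule.finrank_le (vectorSpan ℝ (Set.range z))
        rw [finrank_euclideanSpace_fin] at h2
        omega
      simp only [Set.mem_iUnion]
      let e := Fintype.equivFin ι
      refine ⟨Fintype.card ι, Finset.mem_range.2 (by omega),
        (fun i => w (e.symm i), fun i => z (e.symm i)), ⟨⟨fun i => (hw _).le, ?_⟩, ?_⟩, ?_⟩
      · rw [← hw1]
        exact Equiv.sum_comp e.symm w
      · intro i _
        exact hz ⟨_, rfl⟩
      · rw [← hsum]
        exact Equiv.sum_comp e.symm (fun i => w i • z i)
    · intro p hp
      simp only [Set.mem_iUnion] at hp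
      obtain ⟨m, _, ⟨w, z⟩, ⟨⟨hw, hw1⟩, hz⟩, rfl⟩ := hp
      exact (convex_convexHull ℝ s).sum_mem (fun i _ => hw i) hw1
        (fun i _ => subset_convexHull ℝ s (hz i trivial))
  rw [key]
  refine (Finset.range (k + 2)).isCompact_biUnion fun m _ => ?_
  refine ((isCompact_stdSimplex ℝ (Fin m)).prod (isCompact_univ_pi fun _ => hs)).image ?_
  fun_prop

/-- Corollary 2.3 (first part): the `𝓘`-core of an `𝓘`-bounded sequence in `ℝ^k` is the
convex hull of its set of `𝓘`-cluster points. The ideal `𝓘` is represented by its dual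
filter `F`; `𝓘`-boundedness of `x` means `{n : ‖x n‖ > c} ∈ 𝓘` for some `c`, i.e.
`{n : ‖x n‖ ≤ c} ∈ F`. -/
theorem icore_eq_convexHull_clusterPts
    {k : ℕ} (F : Filter ℕ) (hF : F ≤ Filter.cofinite) [F.NeBot]
    (x : ℕ → EuclideanSpace ℝ (Fin k))
    (hx : ∃ c : ℝ, {n : ℕ | ‖x n‖ ≤ c} ∈ F) :
    ⋂ E ∈ F, closedConvexHull ℝ (x '' E) =
      convexHull ℝ {ℓ : EuclideanSpace ℝ (Fin k) | MapClusterPt ℓ F x} := by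
  obtain ⟨c, hc⟩ := hx
  have hmem : ∀ ℓ, MapClusterPt ℓ F x → ∀ E ∈ F, ℓ ∈ closure (x '' E) := by
    intro ℓ hℓ E hE
    exact clusterPt_iff_forall_mem_closure.1 hℓ _ (image_mem_map hE)
  have hcl : IsClosed {ℓ : EuclideanSpace ℝ (Fin k) | MapClusterPt ℓ F x} :=
    isClosed_setOfPred_clusterPt
  have hcomp : IsCompact {ℓ : EuclideanSpace ℝ (Fin k) | MapClusterPt ℓ F x} := by
    refine (isCompact_closedBall (0 : EuclideanSpace ℝ (Fin k)) c).of_isClosed_subset hcl ?_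
    intro ℓ hℓ
    refine closure_minimal ?_ Metric.isClosed_closedBall (hmem ℓ hℓ _ hc)
    rintro _ ⟨n, hn, rfl⟩
    simpa using hn
  apply Set.Subset.antisymm
  · intro p hp
    by_contra hpn
    obtain ⟨f, u, hfu, hup⟩ := geometric_hahn_banach_closed_point (convex_convexHull ℝ _)
      (isCompact_convexHull_aux hcomp).isClosed hpn
    have hE : {n | f (x n) < u} ∈ F := by
      by_contra hcon
      have hfr : ∃ᶠ n in F, x n ∈ Metric.closedBall 0 c ∩ {y | u ≤ f y} := by
        have h1 : ∃ᶠ n in F, ¬ f (x n) < u := Filter.not_eventually.1 hcon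
        refine (h1.and_eventually hc).mono ?_
        rintro n ⟨h2, h3⟩
        exact ⟨by simpa using h3, not_lt.1 h2⟩
      have hK : IsCompact (Metric.closedBall (0 : EuclideanSpace ℝ (Fin k)) c ∩ {y | u ≤ f y}) :=
        (isCompact_closedBall _ _).inter_right (isClosed_le continuous_const f.continuous)
      obtain ⟨a, ha, hac⟩ := hK.exists_mapClusterPt_of_frequently hfr
      exact absurd (hfu a (subset_convexHull ℝ _ hac)) (not_lt.2 ha.2)
    have hp1 := Set.mem_iInter₂.1 hp _ hE
    have hsub : closedConvexHull ℝ (x '' {n | f (x n) < u}) ⊆ {y | f y ≤ u} := by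
      refine closedConvexHull_min ?_ (convex_halfSpace_le f.toLinearMap.isLinear u)
        (isClosed_le f.continuous continuous_const)
      rintro _ ⟨n, hn, rfl⟩
      have hn2 : f (x n) < u := hn
      exact hn2.le
    exact absurd (hsub hp1) (not_le.2 hup)
  · refine Set.subset_iInter₂ fun E hE => convexHull_min ?_ convex_closedConvexHull
    exact fun ℓ hℓ => closure_subset_closedConvexHull (hmem ℓ hℓ E hE)
end

section
/- Let X be a real Banach space, 𝓘 an ideal on ℕ, and x : ℕ → X a sequence such that {n : x n ∉ K} ∈ 𝓘 for some compact set K ⊆ X. Then ℓ ∈ core_x(𝓘) if and only if there exists a Borel probability measure μ on X with μ(Γ_x(𝓘)) = 1 (i.e., μ is supported on the set of 𝓘-cluster points of x, which is compact) such that ℓ = ∫ z dμ(z), the Bochner integral of the identity with respect to μ. -/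
open Filter Topology MeasureTheory

lemma aux_integrable {X : Type*} [NormedAddCommGroup X] [NormedSpace ℝ X]
    [MeasurableSpace X] [BorelSpace X] {Γ : Set X} (hΓ : IsCompact Γ)
    (μ : Measure Γ) [IsFiniteMeasure μ] : Integrable (fun z : Γ => (z : X)) μ := by
  have : CompactSpace Γ := isCompact_iff_compactSpace.1 hΓ
  exact continuous_subtype_val.integrable_of_hasCompactSupport
    (HasCompactSupport.of_compactSpace _)

lemma aux_convex {X : Type*} [NormedAddCommGroup X] [NormedSpace ℝ X]
    [MeasurableSpace X] [BorelSpace X] {Γ : Set X} (hΓ : IsCompact Γ) :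
    Convex ℝ (Set.range fun μ : ProbabilityMeasure Γ => ∫ z : Γ, (z : X) ∂(μ : Measure Γ)) := by
  rintro _ ⟨μ, rfl⟩ _ ⟨ν, rfl⟩ a b ha hb hab
  have hp : IsProbabilityMeasure
      (ENNReal.ofReal a • (μ : Measure Γ) + ENNReal.ofReal b • (ν : Measure Γ)) := by
    constructor
    simp [← ENNReal.ofReal_add ha hb, hab]
  refine ⟨⟨_, hp⟩, ?_⟩
  have h1 := (aux_integrable hΓ (μ : Measure Γ)).smul_measure (c := ENNReal.ofReal a) (by simp)
  have h2 := (aux_integrable hΓ (ν : Measure Γ)).smul_measure (c := ENNReal.ofReal b) (by simp)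
  simp only [ProbabilityMeasure.coe_mk]
  rw [integral_add_measure h1 h2, integral_smul_measure, integral_smul_measure,
    ENNReal.toReal_ofReal ha, ENNReal.toReal_ofReal hb]

lemma aux_closed {X : Type*} [NormedAddCommGroup X] [NormedSpace ℝ X] [CompleteSpace X]
    [MeasurableSpace X] [BorelSpace X] {Γ : Set X} (hΓ : IsCompact Γ) :
    IsClosed (Set.range fun μ : ProbabilityMeasure Γ => ∫ z : Γ, (z : X) ∂(μ : Measure Γ)) := by
  have : CompactSpace Γ := isCompact_iff_compactSpace.1 hΓ
  set b := fun μ : ProbabilityMeasure Γ => ∫ z : Γ, (z : X) ∂(μ : Measure Γ) with hb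
  refine isClosed_of_closure_subset fun ℓ hℓ => ?_
  have hne : (comap b (𝓝 ℓ)).NeBot := by
    rw [comap_neBot_iff_frequently]
    exact mem_closure_iff_frequently.1 hℓ
  let U := Ultrafilter.of (comap b (𝓝 ℓ))
  have hU : Tendsto b U (𝓝 ℓ) := tendsto_comap.mono_left (Ultrafilter.of_le _)
  obtain ⟨μ, -, hμ⟩ := isCompact_univ.ultrafilter_le_nhds U (by simp)
  refine ⟨μ, ?_⟩
  refine (SeparatingDual.eq_iff_forall_dual_eq (R := ℝ)).2 fun φ => ?_
  have hc : Continuous fun μ : ProbabilityMeasure Γ => φ (b μ) := by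
    have h := ProbabilityMeasure.continuous_integral_boundedContinuousFunction
      (BoundedContinuousFunction.mkOfCompact
        (⟨fun z : Γ => φ z, φ.continuous.comp continuous_subtype_val⟩ : C(Γ, ℝ)))
    convert h using 2 with ν
    exact (φ.integral_comp_comm (aux_integrable hΓ (ν : Measure Γ))).symm
  exact tendsto_nhds_unique ((hc.tendsto μ).mono_left hμ) ((φ.continuous.tendsto ℓ).comp hU)

/-- Corollary 2.4: for a sequence `x` in a real Banach space which lies in a compact set
modulo the ideal `𝓘` (represented by its dual filter `F`), a point `ℓ` belongs to the
`𝓘`-core of `x` if and only if `ℓ` is the barycenter of a Borel probability measure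
supported on the set of `𝓘`-cluster points of `x`. -/
theorem mem_icore_iff_barycenter
    {X : Type*} [NormedAddCommGroup X] [NormedSpace ℝ X] [CompleteSpace X]
    [MeasurableSpace X] [BorelSpace X]
    (F : Filter ℕ) (hF : F ≤ Filter.cofinite) [F.NeBot]
    (x : ℕ → X) (hx : ∃ K : Set X, IsCompact K ∧ {n : ℕ | x n ∈ K} ∈ F)
    (ℓ : X) :
    ℓ ∈ ⋂ E ∈ F, closedConvexHull ℝ (x '' E) ↔
      ∃ μ : Measure X, IsProbabilityMeasure μ ∧
        μ {z : X | MapClusterPt z F x} = 1 ∧ ℓ = ∫ z, z ∂μ := by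
  obtain ⟨K, hK, hKF⟩ := hx
  set Γ := {z : X | MapClusterPt z F x} with hΓdef
  have hcl : ∀ E ∈ F, Γ ⊆ closure (x '' E) := by
    intro E hE z hz
    rw [mem_closure_iff_clusterPt]
    exact ClusterPt.mono hz (le_principal_iff.2 (image_mem_map hE))
  have hΓc : IsCompact Γ := by
    refine hK.of_isClosed_subset isClosed_setOfPred_clusterPt ?_
    refine (hcl _ hKF).trans (closure_minimal ?_ hK.isClosed)
    rintro _ ⟨n, hn, rfl⟩
    exact hn
  constructor
  · intro hℓ
    have hle : map x F ≤ 𝓝ˢ Γ := hK.le_nhdsSet_of_clusterPt hKF fun y _ hy => hy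
    have h1 : ℓ ∈ closure (convexHull ℝ Γ) := by
      rw [Metric.closure_eq_iInter_cthickening]
      simp only [Set.mem_iInter]
      intro ε hε
      have hE : x ⁻¹' Metric.thickening ε Γ ∈ F := hle (Metric.thickening_mem_nhdsSet Γ hε)
      have h2 := Set.mem_iInter₂.1 hℓ _ hE
      refine closedConvexHull_min ?_ ((convex_convexHull ℝ Γ).cthickening ε)
        Metric.isClosed_cthickening h2
      refine (Set.image_preimage_subset _ _).trans ?_
      exact (Metric.thickening_subset_cthickening _ _).trans
        (Metric.cthickening_subset_of_subset _ (subset_convexHull ℝ Γ))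
    have h3 : closure (convexHull ℝ Γ) ⊆
        Set.range fun μ : ProbabilityMeasure Γ => ∫ z : Γ, (z : X) ∂(μ : Measure Γ) := by
      refine closure_minimal (convexHull_min ?_ (aux_convex hΓc)) (aux_closed hΓc)
      intro z hz
      refine ⟨⟨Measure.dirac ⟨z, hz⟩, inferInstance⟩, ?_⟩
      simp
    obtain ⟨μ, hμ⟩ := h3 h1
    have hemb : MeasurableEmbedding (Subtype.val : Γ → X) :=
      MeasurableEmbedding.subtype_coe hΓc.isClosed.measurableSet
    refine ⟨(μ : Measure Γ).map Subtype.val,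
      Measure.isProbabilityMeasure_map hemb.measurable.aemeasurable, ?_, ?_⟩
    · rw [hemb.map_apply]
      simp
    · rw [hemb.integral_map]
      exact hμ.symm
  · rintro ⟨μ, hμ, hμΓ, rfl⟩
    have hae : ∀ᵐ z ∂μ, z ∈ Γ :=
      (mem_ae_iff_prob_eq_one hΓc.isClosed.measurableSet).2 hμΓ
    have hint : Integrable (fun z : X => z) μ := by
      have := (continuousOn_id (s := Γ)).integrableOn_compact (μ := μ) hΓc
      rwa [IntegrableOn, Measure.restrict_eq_self_of_ae_mem hae] at this
    simp only [Set.mem_iInter]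
    intro E hE
    refine convex_closedConvexHull.integral_mem isClosed_closedConvexHull ?_ hint
    filter_upwards [hae] with z hz
    exact closure_subset_closedConvexHull (hcl E hE hz)
end

section
/- Let X be a real Hilbert space, 𝓘 an ideal on ℕ, and x : ℕ → X a sequence such that the closure of {x n : n ∈ E} is compact for some E ∈ 𝓘*. For each y ∈ X, let m(y) denote the supremum (which is attained) of the set of 𝓘-cluster points of the real sequence n ↦ ‖x n - y‖. Then core_x(𝓘) = ⋂_{y ∈ X} {h ∈ X : ‖h - y‖ ≤ m(y)}. -/
open Filter Topology

/-- Theorem 2.5: for a sequence `x` in a real Hilbert space whose trace on some set `E`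
of the dual filter `F` of the ideal `𝓘` has compact closure, the `𝓘`-core of `x` equals
the intersection, over all `y`, of the closed balls centered at `y` with radius
`m(y) = sSup Γ_{‖x n - y‖}(𝓘)` (this supremum being attained). -/
theorem icore_eq_iInter_balls
    {X : Type*} [NormedAddCommGroup X] [InnerProductSpace ℝ X] [CompleteSpace X]
    (F : Filter ℕ) (hF : F ≤ Filter.cofinite) [F.NeBot]
    (x : ℕ → X) (hx : ∃ E ∈ F, IsCompact (closure (x '' E))) :
    ⋂ E ∈ F, closedConvexHull ℝ (x '' E) =
      ⋂ y : X, {h : X | ‖h - y‖ ≤ sSup {t : ℝ | MapClusterPt t F (fun n => ‖x n - y‖)}} := by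
  obtain ⟨E₀, hE₀, hK⟩ := hx
  have hbd : ∀ y : X, ∃ R : ℝ, 0 ≤ R ∧ ∀ n ∈ E₀, ‖x n - y‖ ≤ R := by
    intro y
    obtain ⟨R, hR⟩ := hK.isBounded.subset_closedBall y
    refine ⟨max R 0, le_max_right _ _, fun n hn => ?_⟩
    have := hR (subset_closure (Set.mem_image_of_mem x hn))
    rw [Metric.mem_closedBall, dist_eq_norm] at this
    exact this.trans (le_max_left _ _)
  have hle : ∀ (y : X) (B : ℝ), (∀ᶠ n in F, ‖x n - y‖ ≤ B) →
      ∀ t, MapClusterPt t F (fun n => ‖x n - y‖) → t ≤ B := by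
    intro y B hB t ht
    by_contra! hlt
    have h1 := (ht.frequently (Ioi_mem_nhds hlt)).and_eventually hB
    obtain ⟨n, h2, h3⟩ := h1.exists
    exact absurd h3 (not_le.mpr h2)
  ext h
  simp only [Set.mem_iInter, Set.mem_setOf_eq]
  constructor
  · intro hh y
    obtain ⟨R, hR0, hR⟩ := hbd y
    have hRev : ∀ᶠ n in F, ‖x n - y‖ ≤ R := by
      filter_upwards [hE₀] with n hn using hR n hn
    set T := {t : ℝ | MapClusterPt t F (fun n => ‖x n - y‖)} with hT
    have hTb : BddAbove T := ⟨R, fun t ht => hle y R hRev t ht⟩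
    refine le_of_forall_pos_le_add fun ε hε => ?_
    have hev : ∀ᶠ n in F, ‖x n - y‖ ≤ sSup T + ε := by
      by_contra hne
      have hfr : ∃ᶠ n in F, ‖x n - y‖ ∈ Set.Icc (sSup T + ε) R := by
        have := (not_eventually.mp hne).and_eventually hRev
        exact this.mono fun n hn => ⟨(not_le.mp hn.1).le, hn.2⟩
      obtain ⟨t, ht, htc⟩ := isCompact_Icc.exists_mapClusterPt_of_frequently hfr
      have := le_csSup hTb (show t ∈ T from htc)
      linarith [ht.1]
    have hmem := hh _ hev
    have hsub : closedConvexHull ℝ (x '' {n | ‖x n - y‖ ≤ sSup T + ε}) ⊆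
        Metric.closedBall y (sSup T + ε) := by
      refine closedConvexHull_min ?_ (convex_closedBall _ _) Metric.isClosed_closedBall
      rintro _ ⟨n, hn, rfl⟩
      rw [Metric.mem_closedBall, dist_eq_norm]
      exact hn
    have := hsub hmem
    rwa [Metric.mem_closedBall, dist_eq_norm] at this
  · intro hh E hE
    by_contra hnot
    set C := closedConvexHull ℝ (x '' E) with hC
    have hCconv : Convex ℝ C := convex_closedConvexHull
    have hCcl : IsClosed C := isClosed_closedConvexHull
    have hsub : x '' E ⊆ C := subset_closedConvexHull
    obtain ⟨n₀, hn₀⟩ := F.nonempty_of_mem hE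
    have hCne : C.Nonempty := ⟨x n₀, hsub ⟨n₀, hn₀, rfl⟩⟩
    obtain ⟨p, hpC, hp⟩ := exists_norm_eq_iInf_of_complete_convex hCne hCcl.isComplete hCconv h
    have hin := (norm_eq_iInf_iff_real_inner_le_zero hCconv hpC).mp hp
    obtain ⟨v, hv⟩ : ∃ v, v = h - p := ⟨_, rfl⟩
    rw [← hv] at hin
    have hv0 : 0 < ‖v‖ := by
      rw [norm_pos_iff, hv, sub_ne_zero]
      rintro rfl
      exact hnot hpC
    obtain ⟨R, hR0, hR⟩ := hbd p
    obtain ⟨t, ht⟩ : ∃ t, t = R ^ 2 / ‖v‖ ^ 2 := ⟨_, rfl⟩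
    have ht0 : 0 ≤ t := by rw [ht]; positivity
    have htv : t * ‖v‖ ^ 2 = R ^ 2 := by rw [ht]; field_simp
    have hB : ∀ᶠ n in F, ‖x n - (p - t • v)‖ ≤ √(R ^ 2 + t ^ 2 * ‖v‖ ^ 2) := by
      filter_upwards [hE, hE₀] with n hn hn0
      apply Real.le_sqrt_of_sq_le
      have h1 : x n - (p - t • v) = (x n - p) + t • v := by abel
      have h2 := hin (x n) (hsub ⟨n, hn, rfl⟩)
      rw [h1, norm_add_sq_real, inner_smul_right, norm_smul, mul_pow, Real.norm_eq_abs, sq_abs,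
        real_inner_comm]
      have h3 : ‖x n - p‖ ^ 2 ≤ R ^ 2 := by
        gcongr
        exact hR n hn0
      have h4 := mul_nonpos_of_nonneg_of_nonpos ht0 h2
      linarith
    have hfin := (hh (p - t • v)).trans
      (Real.sSup_le (fun s hs => hle _ _ hB s hs) (Real.sqrt_nonneg _))
    have h5 : h - (p - t • v) = (1 + t) • v := by
      rw [add_smul, one_smul, hv]; abel
    rw [h5, norm_smul, Real.norm_eq_abs, abs_of_nonneg (by linarith)] at hfin
    have h6 := (Real.le_sqrt' (by positivity)).mp hfin
    nlinarith [pow_pos hv0 2, sq_nonneg R]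
end

section
/- Let X be a first countable Hausdorff topological space, 𝓘 an ideal on ℕ, and x : ℕ → X a sequence such that {n : x n ∉ K} ∈ 𝓘 for some compact set K ⊆ X. Then x is 𝓘-convergent to ℓ (i.e., {n : x n ∉ U} ∈ 𝓘 for every neighborhood U of ℓ; equivalently, Tendsto x 𝓘* (𝓝 ℓ)) if and only if the set of 𝓘-cluster points of x is exactly {ℓ}. -/
open Filter Topology

/-- Lemma 4.1: if `x` is a sequence in a first countable Hausdorff topological space
lying in a compact set modulo the ideal `𝓘` (represented by its dual filter `F`), then
`x` is `𝓘`-convergent to `ℓ` iff `ℓ` is the unique `𝓘`-cluster point of `x`. -/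
theorem iconv_iff_clusterPts_eq_singleton
    {X : Type*} [TopologicalSpace X] [T2Space X] [FirstCountableTopology X]
    (F : Filter ℕ) (hF : F ≤ Filter.cofinite) [F.NeBot]
    (x : ℕ → X) (hx : ∃ K : Set X, IsCompact K ∧ {n : ℕ | x n ∈ K} ∈ F)
    (ℓ : X) :
    Tendsto x F (𝓝 ℓ) ↔ {z : X | MapClusterPt z F x} = {ℓ} := by
  constructor
  · intro h
    ext z
    simp only [Set.mem_setOf_eq, Set.mem_singleton_iff]
    constructor
    · intro hz
      have hz2 : (𝓝 z ⊓ map x F).NeBot := hz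
      have hne : (𝓝 z ⊓ 𝓝 ℓ).NeBot := hz2.mono (inf_le_inf_left _ h)
      exact eq_of_nhds_neBot hne
    · rintro rfl
      exact h.mapClusterPt
  · intro h
    obtain ⟨K, hK, hKF⟩ := hx
    refine hK.tendsto_nhds_of_unique_mapClusterPt hKF fun z _ hz => ?_
    have hz2 : z ∈ {z : X | MapClusterPt z F x} := hz
    rw [h] at hz2
    exact hz2
end

section
/- Let X be a real Banach space, 𝓘 an ideal on ℕ, and x : ℕ → X a sequence such that {n : x n ∉ K} ∈ 𝓘 for some compact set K ⊆ X. Then the 𝓘-core of x is a nonempty, convex, compact subset of X. -/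
open Filter Topology

/-- From the proof of Corollary 2.4: if `x` is a sequence in a real Banach space lying
in a compact set modulo the ideal `𝓘` (represented by its dual filter `F`), then the
`𝓘`-core of `x` is nonempty, convex and compact. -/
theorem icore_nonempty_convex_isCompact
    {X : Type*} [NormedAddCommGroup X] [NormedSpace ℝ X] [CompleteSpace X]
    (F : Filter ℕ) (hF : F ≤ Filter.cofinite) [F.NeBot]
    (x : ℕ → X) (hx : ∃ K : Set X, IsCompact K ∧ {n : ℕ | x n ∈ K} ∈ F) :
    (⋂ E ∈ F, closedConvexHull ℝ (x '' E)).Nonempty ∧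
      Convex ℝ (⋂ E ∈ F, closedConvexHull ℝ (x '' E)) ∧
      IsCompact (⋂ E ∈ F, closedConvexHull ℝ (x '' E)) := by
  obtain ⟨K, hK, hKF⟩ := hx
  refine ⟨?_, ?_, ?_⟩
  · have hle : Filter.map x F ≤ 𝓟 K := by
      rw [Filter.le_principal_iff]
      exact hKF
    obtain ⟨a, -, ha⟩ := hK hle
    refine ⟨a, ?_⟩
    simp only [Set.mem_iInter]
    intro E hE
    apply closure_subset_closedConvexHull
    exact ha.mem_closure_of_mem _ (Filter.image_mem_map hE)
  · exact convex_iInter₂ fun E _ => convex_closedConvexHull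
  · have hc : IsCompact (closedConvexHull ℝ K) := by
      rw [closedConvexHull_eq_closure_convexHull]
      exact TotallyBounded.isCompact_of_isClosed
        (totallyBounded_convexHull.2 hK.totallyBounded).closure isClosed_closure
    refine hc.of_isClosed_subset
      (isClosed_biInter fun E _ => isClosed_closedConvexHull) ?_
    refine (Set.biInter_subset_of_mem hKF).trans ?_
    refine closedConvexHull_min ?_ convex_closedConvexHull isClosed_closedConvexHull
    rintro _ ⟨n, hn, rfl⟩
    exact subset_closedConvexHull hn
end

section
/- Let 𝒵 be the ideal of asymptotic density zero subsets of ℕ, i.e., A ∈ 𝒵 iff (|A ∩ [1,n]|)/n → 0 as n → ∞, and let x : ℕ → ℝ be the sequence x n = (-1)^n · n. Then the 𝒵-core of x is all of ℝ, while the set of 𝒵-cluster points of x is empty: core_x(𝒵) = ℝ and Γ_x(𝒵) = ∅. -/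
open Filter Topology

open scoped Classical

/-- A set `A ⊆ ℕ` has asymptotic density zero: `|A ∩ [1, n]| / n → 0`. -/
def DensityZero (A : Set ℕ) : Prop :=
  Tendsto (fun n : ℕ => (((Finset.Icc 1 n).filter (· ∈ A)).card : ℝ) / n) atTop (𝓝 0)

lemma exists_parity_notMem {A : Set ℕ} (hA : DensityZero A) (r : ℕ) (hr : r < 2) (N : ℕ) :
    ∃ n, N ≤ n ∧ n % 2 = r ∧ n ∉ A := by
  by_contra! hcon
  have h1 : ∀ᶠ n : ℕ in atTop,
      (((Finset.Icc 1 n).filter (· ∈ A)).card : ℝ) / n < 1 / 4 :=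
    hA.eventually_lt_const (by norm_num)
  obtain ⟨K, hK⟩ := eventually_atTop.1 h1
  obtain ⟨M, hM⟩ : ∃ M, M = N + K + 1 := ⟨_, rfl⟩
  have h2 := hK (4 * M) (by omega)
  have h3 : M ≤ ((Finset.Icc 1 (4 * M)).filter (· ∈ A)).card := by
    have h4 : (Finset.range M).image (fun k => 2 * (M + k) + r) ⊆
        (Finset.Icc 1 (4 * M)).filter (· ∈ A) := by
      intro n hn
      obtain ⟨k, hk, rfl⟩ := Finset.mem_image.1 hn
      have hk' := Finset.mem_range.1 hk
      refine Finset.mem_filter.2 ⟨Finset.mem_Icc.2 ⟨by omega, by omega⟩, ?_⟩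
      exact hcon _ (by omega) (by omega)
    have h5 := Finset.card_le_card h4
    rwa [Finset.card_image_of_injective _ (fun a b hab => by simpa using hab),
      Finset.card_range] at h5
  have hMpos : (0 : ℝ) < M := by
    have : 0 < M := by omega
    exact_mod_cast this
  have h3' : (M : ℝ) ≤ (((Finset.Icc 1 (4 * M)).filter (· ∈ A)).card : ℝ) := by
    exact_mod_cast h3
  rw [div_lt_iff₀ (by push_cast; positivity)] at h2
  push_cast at h2
  linarith

lemma densityZero_of_bounded {A : Set ℕ} (N : ℕ) (hA : ∀ n ∈ A, n ≤ N) : DensityZero A := by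
  refine squeeze_zero (fun n => by positivity) (fun n => ?_)
    (tendsto_const_div_atTop_nhds_zero_nat (N : ℝ))
  gcongr
  have h : (Finset.Icc 1 n).filter (· ∈ A) ⊆ Finset.Icc 1 N := by
    intro k hk
    obtain ⟨h1, h2⟩ := Finset.mem_filter.1 hk
    exact Finset.mem_Icc.2 ⟨(Finset.mem_Icc.1 h1).1, hA k h2⟩
  simpa using Finset.card_le_card h

/-- Example after Theorem 2.2: for the sequence `x n = (-1)^n * n`, the `𝒵`-core is all
of `ℝ` while the set of `𝒵`-cluster points is empty, where `𝒵` is the ideal of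
asymptotic density zero sets. -/
theorem icore_univ_clusterPts_empty_example :
    (⋂ E ∈ {E : Set ℕ | DensityZero Eᶜ},
        closedConvexHull ℝ ((fun n : ℕ => (-1 : ℝ) ^ n * n) '' E)) = Set.univ ∧
      {ℓ : ℝ | ∀ U ∈ 𝓝 ℓ, ¬ DensityZero {n : ℕ | (-1 : ℝ) ^ n * n ∈ U}} = ∅ := by
  constructor
  · refine Set.eq_univ_of_forall fun y => Set.mem_iInter₂.2 fun E hE => ?_
    obtain ⟨N, hN⟩ := exists_nat_ge |y|
    obtain ⟨a, ha, ha2, haE⟩ := exists_parity_notMem hE 0 (by norm_num) N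
    obtain ⟨b, hb, hb2, hbE⟩ := exists_parity_notMem hE 1 (by norm_num) N
    have haE' : a ∈ E := by simpa using haE
    have hbE' : b ∈ E := by simpa using hbE
    have h1 := subset_closedConvexHull (𝕜 := ℝ)
      (Set.mem_image_of_mem (fun n : ℕ => (-1 : ℝ) ^ n * n) haE')
    have h2 := subset_closedConvexHull (𝕜 := ℝ)
      (Set.mem_image_of_mem (fun n : ℕ => (-1 : ℝ) ^ n * n) hbE')
    simp only [(Nat.even_iff.2 ha2).neg_one_pow] at h1
    simp only [(Nat.odd_iff.2 hb2).neg_one_pow] at h2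
    have ha' : (N : ℝ) ≤ a := by exact_mod_cast ha
    have hb' : (N : ℝ) ≤ b := by exact_mod_cast hb
    have hy := abs_le.1 hN
    exact (convex_closedConvexHull (𝕜 := ℝ)).ordConnected.out h2 h1
      ⟨by linarith [hy.1], by linarith [hy.2]⟩
  · refine Set.eq_empty_of_forall_notMem fun l hl => ?_
    obtain ⟨N, hN⟩ := exists_nat_ge (|l| + 1)
    refine hl (Metric.ball l 1) (Metric.ball_mem_nhds l one_pos)
      (densityZero_of_bounded N fun n hn => ?_)
    have hn' : |(-1 : ℝ) ^ n * n - l| < 1 := by simpa [Real.dist_eq] using hn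
    have h1 := abs_sub_abs_le_abs_sub ((-1 : ℝ) ^ n * n) l
    have h2 : |(-1 : ℝ) ^ n * n| = n := by simp [abs_mul]
    have : (n : ℝ) ≤ N := by linarith
    exact_mod_cast this
end

section
/- Let X = ℓ∞ be the Banach space of bounded real sequences (lp (fun _ : ℕ => ℝ) ∞) with the supremum norm, and let u_k denote the k-th unit vector. Define x : ℕ → X by x (2k) = u_k and x (2k+1) = -u_k. Then x is not norm-convergent (there is no ℓ with Tendsto x atTop (𝓝 ℓ)), yet its Knopp core is {0}: ⋂_{k ∈ ℕ} closedConvexHull ℝ {x n : n ≥ k} = {0}. -/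
open Filter Topology

/-- Example after Proposition 4.2: the sequence `u₁, -u₁, u₂, -u₂, …` of (signed) unit
vectors in `ℓ∞` is not norm-convergent although its Knopp core is `{0}`. -/
theorem knopp_core_singleton_not_convergent_example
    (x : ℕ → lp (fun _ : ℕ => ℝ) ⊤)
    (hx_even : ∀ k : ℕ, x (2 * k) = lp.single ⊤ k (1 : ℝ))
    (hx_odd : ∀ k : ℕ, x (2 * k + 1) = -lp.single ⊤ k (1 : ℝ)) :
    (¬ ∃ ℓ : lp (fun _ : ℕ => ℝ) ⊤, Tendsto x atTop (𝓝 ℓ)) ∧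
      (⋂ k : ℕ, closedConvexHull ℝ (x '' {n : ℕ | k ≤ n})) =
        {(0 : lp (fun _ : ℕ => ℝ) ⊤)} := by
  have hval : ∀ (j n : ℕ), 2 * j + 2 ≤ n → (x n) j = 0 := by
    intro j n hn
    rcases Nat.even_or_odd' n with ⟨m, rfl | rfl⟩
    · rw [hx_even]
      exact lp.single_apply_ne _ _ _ (by omega)
    · rw [hx_odd]
      have h : (lp.single ⊤ m (1 : ℝ) : lp (fun _ : ℕ => ℝ) ⊤) j = 0 :=
        lp.single_apply_ne _ _ _ (by omega)
      rw [lp.coeFn_neg, Pi.neg_apply, h, neg_zero]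
  constructor
  · rintro ⟨l, hl⟩
    have h1 : Tendsto (fun k : ℕ => x (2 * k)) atTop (𝓝 l) :=
      hl.comp (tendsto_atTop_mono (fun k => by simp only [id]; omega) tendsto_id)
    have h2 : Tendsto (fun k : ℕ => x (2 * k + 1)) atTop (𝓝 l) :=
      hl.comp (tendsto_atTop_mono (fun k => by simp only [id]; omega) tendsto_id)
    have h3 := (h1.sub h2).norm
    rw [sub_self, norm_zero] at h3
    have h4 : ∀ k : ℕ, (2 : ℝ) ≤ ‖x (2 * k) - x (2 * k + 1)‖ := by
      intro k
      have h := lp.norm_apply_le_norm ENNReal.top_ne_zero (x (2 * k) - x (2 * k + 1)) k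
      have e : (x (2 * k) - x (2 * k + 1)) k = 2 := by
        have h1 : (lp.single ⊤ k (1 : ℝ) : lp (fun _ : ℕ => ℝ) ⊤) k = 1 :=
          lp.single_apply_self _ _ _
        rw [hx_even, hx_odd, sub_neg_eq_add, lp.coeFn_add, Pi.add_apply, h1]
        norm_num
      rw [e] at h
      simpa using h
    have h5 := ge_of_tendsto' h3 h4
    norm_num at h5
  · apply Set.Subset.antisymm
    · intro y hy
      rw [Set.mem_singleton_iff]
      apply lp.ext
      funext j
      have hy' := Set.mem_iInter.1 hy (2 * j + 2)
      have hcont : Continuous (fun f : lp (fun _ : ℕ => ℝ) ⊤ => f j) := by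
        refine LipschitzWith.continuous (K := 1) (LipschitzWith.of_dist_le_mul fun f g => ?_)
        have h := lp.norm_apply_le_norm ENNReal.top_ne_zero (f - g) j
        rw [lp.coeFn_sub, Pi.sub_apply] at h
        simpa [dist_eq_norm] using h
      have hsub : closedConvexHull ℝ (x '' {n : ℕ | 2 * j + 2 ≤ n}) ⊆
          {f : lp (fun _ : ℕ => ℝ) ⊤ | f j = 0} := by
        apply closedConvexHull_min
        · rintro _ ⟨n, hn, rfl⟩
          exact hval j n hn
        · intro f hf g hg a b _ _ _
          simp only [Set.mem_setOf_eq] at hf hg ⊢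
          rw [lp.coeFn_add, Pi.add_apply, lp.coeFn_smul, lp.coeFn_smul, Pi.smul_apply,
            Pi.smul_apply, hf, hg]
          simp
        · exact isClosed_eq hcont continuous_const
      exact hsub hy'
    · rintro _ rfl
      refine Set.mem_iInter.2 fun k => ?_
      have ha : x (2 * k) ∈ closedConvexHull ℝ (x '' {n : ℕ | k ≤ n}) :=
        subset_closedConvexHull ⟨2 * k, by simp only [Set.mem_setOf_eq]; omega, rfl⟩
      have hb : x (2 * k + 1) ∈ closedConvexHull ℝ (x '' {n : ℕ | k ≤ n}) :=
        subset_closedConvexHull ⟨2 * k + 1, by simp only [Set.mem_setOf_eq]; omega, rfl⟩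
      have h := convex_closedConvexHull ha hb (by norm_num : (0 : ℝ) ≤ 1 / 2)
        (by norm_num : (0 : ℝ) ≤ 1 / 2) (by norm_num)
      rw [hx_even, hx_odd, smul_neg, add_neg_cancel] at h
      exact h
end

section
/- Let x : ℕ → ℝ be a bounded sequence. Then the Knopp core of x is the closed interval from its limit inferior to its limit superior: ⋂_{k ∈ ℕ} closedConvexHull ℝ {x n : n ≥ k} = Set.Icc (liminf x) (limsup x), where liminf and limsup are taken along atTop. -/
open Filter Topology

/-- Section 1: the Knopp core of a bounded real sequence is the compact interval from
its limit inferior to its limit superior. -/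
theorem knopp_core_eq_Icc_liminf_limsup
    (x : ℕ → ℝ) (hx : ∃ C : ℝ, ∀ n, |x n| ≤ C) :
    (⋂ k : ℕ, closedConvexHull ℝ (x '' {n : ℕ | k ≤ n})) =
      Set.Icc (liminf x atTop) (limsup x atTop) := by
  obtain ⟨C, hC⟩ := hx
  have hbu : IsBoundedUnder (· ≤ ·) atTop x :=
    isBoundedUnder_of ⟨C, fun n => (abs_le.1 (hC n)).2⟩
  have hbl : IsBoundedUnder (· ≥ ·) atTop x :=
    isBoundedUnder_of ⟨-C, fun n => (abs_le.1 (hC n)).1⟩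
  have hcu : IsCoboundedUnder (· ≤ ·) atTop x := hbl.isCoboundedUnder_flip
  have hcl : IsCoboundedUnder (· ≥ ·) atTop x := hbu.isCoboundedUnder_flip
  apply Set.Subset.antisymm
  · intro y hy
    rw [Set.mem_iInter] at hy
    constructor
    · refine le_of_forall_lt fun a ha => ?_
      obtain ⟨b, hab, hb⟩ := exists_between ha
      obtain ⟨k, hk⟩ := eventually_atTop.1 (eventually_lt_of_lt_liminf hb hbl)
      have h : closedConvexHull ℝ (x '' {n : ℕ | k ≤ n}) ⊆ Set.Ici b := by
        refine closedConvexHull_min ?_ (convex_Ici b) isClosed_Ici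
        rintro _ ⟨n, hn, rfl⟩
        exact (hk n hn).le
      exact hab.trans_le (h (hy k))
    · refine le_of_forall_gt fun a ha => ?_
      obtain ⟨b, hb, hab⟩ := exists_between ha
      obtain ⟨k, hk⟩ := eventually_atTop.1 (eventually_lt_of_limsup_lt hb hbu)
      have h : closedConvexHull ℝ (x '' {n : ℕ | k ≤ n}) ⊆ Set.Iic b := by
        refine closedConvexHull_min ?_ (convex_Iic b) isClosed_Iic
        rintro _ ⟨n, hn, rfl⟩
        exact (hk n hn).le
      exact lt_of_le_of_lt (h (hy k)) hab
  · intro y hy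
    rw [Set.mem_iInter]
    intro k
    have h1 : liminf x atTop ∈ closedConvexHull ℝ (x '' {n : ℕ | k ≤ n}) := by
      apply closure_subset_closedConvexHull
      rw [Metric.mem_closure_iff]
      intro ε hε
      have hf := frequently_lt_of_liminf_lt hcl (lt_add_of_pos_right (liminf x atTop) hε)
      have he := eventually_lt_of_lt_liminf (sub_lt_self (liminf x atTop) hε) hbl
      obtain ⟨n, h1, h2, h3⟩ := (hf.and_eventually (he.and (eventually_ge_atTop k))).exists
      refine ⟨x n, ⟨n, h3, rfl⟩, ?_⟩
      rw [Real.dist_eq, abs_lt]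
      constructor <;> linarith
    have h2 : limsup x atTop ∈ closedConvexHull ℝ (x '' {n : ℕ | k ≤ n}) := by
      apply closure_subset_closedConvexHull
      rw [Metric.mem_closure_iff]
      intro ε hε
      have hf := frequently_lt_of_lt_limsup hcu (sub_lt_self (limsup x atTop) hε)
      have he := eventually_lt_of_limsup_lt (lt_add_of_pos_right (limsup x atTop) hε) hbu
      obtain ⟨n, h1, h2, h3⟩ := (hf.and_eventually (he.and (eventually_ge_atTop k))).exists
      refine ⟨x n, ⟨n, h3, rfl⟩, ?_⟩
      rw [Real.dist_eq, abs_lt]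
      constructor <;> linarith
    exact convex_closedConvexHull.ordConnected.out h1 h2 hy
end

section
/- Let x : ℕ → ℂ be a bounded sequence. Then the Knopp core of x admits the characterization ⋂_{k ∈ ℕ} closedConvexHull ℝ {x n : n ≥ k} = ⋂_{y ∈ ℂ} {z ∈ ℂ : ‖z - y‖ ≤ limsup_{n} ‖x n - y‖}, where the limsup is taken along atTop. -/
open Filter Topology

/-- Equation (1.2): the Knopp core of a bounded complex sequence `x` equals the
intersection over all `y ∈ ℂ` of the closed balls centered at `y` of radius
`limsup_n ‖x n - y‖`. -/
theorem knopp_core_eq_iInter_limsup_balls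
    (x : ℕ → ℂ) (hx : ∃ C : ℝ, ∀ n, ‖x n‖ ≤ C) :
    (⋂ k : ℕ, closedConvexHull ℝ (x '' {n : ℕ | k ≤ n})) =
      ⋂ y : ℂ, {z : ℂ | ‖z - y‖ ≤ limsup (fun n => ‖x n - y‖) atTop} := by
  obtain ⟨C, hC⟩ := hx
  have hbd : ∀ y : ℂ, IsBoundedUnder (· ≤ ·) atTop (fun n => ‖x n - y‖) := fun y =>
    isBoundedUnder_of ⟨C + ‖y‖, fun n => (norm_sub_le _ _).trans (by linarith [hC n])⟩
  have hcobd : ∀ y : ℂ, IsCoboundedUnder (· ≤ ·) atTop (fun n => ‖x n - y‖) := fun y =>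
    (isBoundedUnder_of (r := (· ≥ ·)) ⟨0, fun n => norm_nonneg _⟩).isCoboundedUnder_le
  apply Set.Subset.antisymm
  · intro z hz
    simp only [Set.mem_iInter, Set.mem_setOf_eq] at hz ⊢
    intro y
    refine le_of_forall_gt_imp_ge_of_dense fun b hb => ?_
    obtain ⟨k, hk⟩ := eventually_atTop.1 (eventually_lt_of_limsup_lt hb (hbd y))
    have hsub : closedConvexHull ℝ (x '' {n : ℕ | k ≤ n}) ⊆ Metric.closedBall y b := by
      refine closedConvexHull_min ?_ (convex_closedBall y b) Metric.isClosed_closedBall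
      rintro _ ⟨n, hn, rfl⟩
      rw [mem_closedBall_iff_norm]
      exact (hk n hn).le
    exact mem_closedBall_iff_norm.1 (hsub (hz k))
  · intro z hz
    simp only [Set.mem_iInter, Set.mem_setOf_eq] at hz ⊢
    intro k
    by_contra hzk
    set K := closedConvexHull ℝ (x '' {n : ℕ | k ≤ n}) with hK
    have hxK : ∀ n, k ≤ n → x n ∈ K := fun n hn =>
      subset_closedConvexHull ⟨n, hn, rfl⟩
    have hconv : Convex ℝ K := convex_closedConvexHull
    have hclosed : IsClosed K := isClosed_closedConvexHull
    obtain ⟨v, hv, hmin⟩ := exists_norm_eq_iInf_of_complete_convex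
      ⟨x k, hxK k le_rfl⟩ hclosed.isComplete hconv z
    have hin := (norm_eq_iInf_iff_real_inner_le_zero hconv hv).1 hmin
    obtain ⟨w, hw⟩ : ∃ w, w = v - z := ⟨_, rfl⟩
    have hw0 : 0 < ‖w‖ := by
      rw [norm_pos_iff, hw, sub_ne_zero]
      rintro rfl
      exact hzk hv
    have hkey : ∀ p ∈ K, ‖w‖ ^ 2 ≤ inner ℝ (p - z) w := by
      intro p hp
      have h1 := hin p hp
      have e1 : z - v = -w := by rw [hw]; ring
      have e2 : p - v = (p - z) - w := by rw [hw]; ring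
      rw [e1, e2, inner_neg_left, inner_sub_right, real_inner_self_eq_norm_sq,
        real_inner_comm] at h1
      linarith
    obtain ⟨M, hM⟩ : ∃ M, M = C + ‖z‖ + 1 := ⟨_, rfl⟩
    have hMpos : 0 < M := by
      have := (norm_nonneg _).trans (hC 0)
      have := norm_nonneg z
      linarith
    obtain ⟨t, ht⟩ : ∃ t, t = M ^ 2 / ‖w‖ ^ 2 := ⟨_, rfl⟩
    have htpos : 0 < t := by rw [ht]; positivity
    have htw : t * ‖w‖ ^ 2 = M ^ 2 := by rw [ht]; field_simp
    have hbound : ∀ n, k ≤ n → ‖x n - (z + t • w)‖ ≤ √((t * ‖w‖) ^ 2 - M ^ 2) := by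
      intro n hn
      apply Real.le_sqrt_of_sq_le
      have h1 := hkey _ (hxK n hn)
      have h2 : ‖x n - z‖ ≤ M := (norm_sub_le _ _).trans (by linarith [hC n])
      have h3 : ‖x n - z‖ ^ 2 ≤ M ^ 2 := by gcongr
      have h4 := mul_le_mul_of_nonneg_left h1 htpos.le
      rw [← sub_sub, norm_sub_sq_real, inner_smul_right, norm_smul, Real.norm_of_nonneg htpos.le]
      linarith
    have hlim : limsup (fun n => ‖x n - (z + t • w)‖) atTop ≤ √((t * ‖w‖) ^ 2 - M ^ 2) :=
      limsup_le_of_le (hcobd _) (eventually_atTop.2 ⟨k, hbound⟩)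
    have hz' := (hz (z + t • w)).trans hlim
    have hlt : √((t * ‖w‖) ^ 2 - M ^ 2) < t * ‖w‖ := by
      rw [Real.sqrt_lt' (by positivity)]
      have : 0 < M ^ 2 := by positivity
      linarith
    rw [sub_add_cancel_left, norm_neg, norm_smul, Real.norm_of_nonneg htpos.le] at hz'
    linarith
end
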